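/- For the case a = 1/2 (classical elliptic integrals) the submultiplicativity inequality φ_K(r)·φ_K(t)/φ_K(rt) ≤ exp((1 − 1/K)(m(r) + m(t) − m(rt))) holds for all r, t ∈ (0,1) and K ≥ 1, where φ_K is the Hersch–Pfluger distortion function and m(r) = (2/π)(1-r²)K(√(1-r²))K(r). -/

import Mathlib

open Real Filter Set Topology

/-- Pochhammer symbol (rising factorial) for real `x`. -/
noncomputable def poch (x : ℝ) (n : ℕ) : ℝ := (ascPochhammer ℝ n).eval x

/-- Generalized complete elliptic integral of the first kind. -/
noncomputable def Ka (a r : ℝ) : ℝ :=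
  (π / 2) * ∑' n : ℕ, (poch a n * poch (1 - a) n / (n.factorial : ℝ) ^ 2) * r ^ (2 * n)

/-- Generalized complete elliptic integral of the second kind. -/
noncomputable def Ea (a r : ℝ) : ℝ :=
  (π / 2) * ∑' n : ℕ, (poch (a - 1) n * poch (1 - a) n / (n.factorial : ℝ) ^ 2) * r ^ (2 * n)

/-- Generalized Grötzsch ring function. -/
noncomputable def muG (a r : ℝ) : ℝ :=
  π / (2 * Real.sin (π * a)) * (Ka a (Real.sqrt (1 - r ^ 2)) / Ka a r)

/-- Generalized Hersch–Pfluger distortion function. -/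
noncomputable def phiHP (a K r : ℝ) : ℝ := Function.invFun (muG a) (muG a r / K)

/-- The function mₐ(r). -/
noncomputable def mA (a r : ℝ) : ℝ :=
  2 / (π * Real.sin (π * a)) * (1 - r ^ 2) * Ka a (Real.sqrt (1 - r ^ 2)) * Ka a r

/-- Digamma function (as the logarithmic derivative of Γ). -/
noncomputable def psiDG (x : ℝ) : ℝ := deriv (fun t => Real.log (Real.Gamma t)) x

/-- Ramanujan constant R(a). -/
noncomputable def RamanujanR (a : ℝ) : ℝ :=
  -2 * Real.eulerMascheroniConstant - psiDG a - psiDG (1 - a)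

/-!
In the coordinate `x = -log r > 0` put `U(x) = μ(r)`, `M(x) = m(r)` and `Y(x) = -log φ_K(r)`, and
let `u = 1 / K`, so that `U ∘ Y = u U`. Taking logarithms, the theorem says that `Y + (1 - u) M`
is subadditive, and it is enough that `(Y + (1 - u) M) / x` is decreasing.

Legendre's relation gives `U' = U / M`, hence `Y' = M(Y) / M`, and the sign of the derivative of
`(Y + (1 - u) M) / x` is that of `x M(Y) / M(x) - Y - (1 - U(Y) / U(x)) (M(x) - x M'(x))`. With
`y ≤ x` in place of `Y`, this vanishes at `y = x` and increases with `y`, because `M'` is decreasing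
and at least `1`, the latter making `U / M` decreasing.

With `z = r²`, `F = ₂F₁(a, 1 - a; 1; ·)` and `s = sin (π a)`, one finds
`M' = (π / s) F(z) E(1 - z) - 1` for an explicit decreasing function `E`, and the bounds on `M'`
come down to `z (1 - z) F'(z) ≤ a (1 - a) z F(z)` and `a (1 - a) ≤ 1 / 4`. This works for every
`0 < a < 1`. The constant in Legendre's relation comes from `n c_n → s / π` for the Taylor
coefficients `c_n` of `F`, a form of Euler's reflection formula for `Γ`.
-/

section Calculus

theorem map_add_le_of_antitoneOn_div {f : ℝ → ℝ} (hf : AntitoneOn (fun x => f x / x) (Ioi 0))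
    {x y : ℝ} (hx : 0 < x) (hy : 0 < y) : f (x + y) ≤ f x + f y := by
  have hxy : 0 < x + y := add_pos hx hy
  have hfx : f (x + y) / (x + y) ≤ f x / x := hf hx hxy (by linarith)
  have hfy : f (x + y) / (x + y) ≤ f y / y := hf hy hxy (by linarith)
  rw [le_div_iff₀ hx] at hfx
  rw [le_div_iff₀ hy] at hfy
  calc f (x + y) = f (x + y) / (x + y) * x + f (x + y) / (x + y) * y := by field_simp
    _ ≤ f x + f y := add_le_add hfx hfy

theorem continuousAt_of_strictMonoOn_comp {α β γ : Type*} [TopologicalSpace α] [LinearOrder β]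
    [TopologicalSpace β] [OrderTopology β] [LinearOrder γ] [TopologicalSpace γ] [OrderTopology γ]
    {U : β → γ} {Y : α → β} {s : Set β} {x : α} (hU : StrictMonoOn U s) (hs : s.OrdConnected)
    (hY : ∀ᶠ x' in 𝓝 x, Y x' ∈ s) (hUY : ContinuousAt (U ∘ Y) x) : ContinuousAt Y x := by
  have hx : Y x ∈ s := hY.self_of_nhds
  refine tendsto_order.2 ⟨fun b hb => ?_, fun b hb => ?_⟩ <;> by_cases hbs : b ∈ s
  · filter_upwards [hY, hUY.eventually (eventually_gt_nhds (hU hbs hx hb))] with x' hx' hlt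
    exact (hU.lt_iff_lt hbs hx').1 hlt
  · filter_upwards [hY] with x' hx'
    exact not_le.1 fun h => hbs (hs.out hx' hx ⟨h, hb.le⟩)
  · filter_upwards [hY, hUY.eventually (eventually_lt_nhds (hU hx hbs hb))] with x' hx' hlt
    exact (hU.lt_iff_lt hx' hbs).1 hlt
  · filter_upwards [hY] with x' hx'
    exact not_le.1 fun h => hbs (hs.out hx hx' ⟨hb.le, h⟩)

end Calculus

section Subadditivity

variable {U M M' Y : ℝ → ℝ} {u : ℝ}

theorem mul_deriv_le_self_of_antitoneOn (hM : ∀ x > 0, HasDerivAt M (M' x) x)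
    (hM' : AntitoneOn M' (Ioi 0)) (hM₀ : Tendsto M (𝓝[>] 0) (𝓝 0)) {x : ℝ} (hx : 0 < x) :
    x * M' x ≤ M x := by
  have hslope : ∀ t ∈ Ioo 0 x, (x - t) * M' x ≤ M x - M t := fun t ht => by
    obtain ⟨c, hc, hc'⟩ := exists_hasDerivAt_eq_slope M M' ht.2
      (fun y hy => (hM y (ht.1.trans_le hy.1)).continuousAt.continuousWithinAt)
      fun y hy => hM y (ht.1.trans hy.1)
    have hle : M' x ≤ M' c := hM' (ht.1.trans hc.1) hx hc.2.le
    rwa [hc', le_div_iff₀' (sub_pos.2 ht.2)] at hle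
  have hlhs : Tendsto (fun t => (x - t) * M' x) (𝓝[>] 0) (𝓝 ((x - 0) * M' x)) :=
    ((tendsto_const_nhds.sub tendsto_id).mul_const _).mono_left nhdsWithin_le_nhds
  have hle := le_of_tendsto_of_tendsto hlhs (tendsto_const_nhds.sub hM₀)
    (eventually_of_mem (Ioo_mem_nhdsGT hx) hslope)
  simpa only [sub_zero] using hle

theorem antitoneOn_div_of_hasDerivAt_div (hU : ∀ x > 0, HasDerivAt U (U x / M x) x)
    (hM : ∀ x > 0, HasDerivAt M (M' x) x) (hU₀ : ∀ x > 0, 0 < U x) (hM₀ : ∀ x > 0, 0 < M x)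
    (hM' : ∀ x > 0, 1 ≤ M' x) : AntitoneOn (fun x => U x / M x) (Ioi 0) := by
  have hderiv : ∀ x > 0, HasDerivAt (fun x => U x / M x) (U x * (1 - M' x) / M x ^ 2) x :=
    fun x hx => ((hU x hx).fun_div (hM x hx) (hM₀ x hx).ne').congr_deriv <| by
      rw [div_mul_cancel₀ _ (hM₀ x hx).ne']; ring
  refine antitoneOn_of_hasDerivWithinAt_nonpos (convex_Ioi 0)
    (fun x hx => (hderiv x hx).continuousAt.continuousWithinAt)
    (fun x hx => (hderiv x (interior_subset hx)).hasDerivWithinAt) fun x hx => ?_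
  exact div_nonpos_of_nonpos_of_nonneg (mul_nonpos_of_nonneg_of_nonpos
    (hU₀ x (interior_subset hx)).le (sub_nonpos.2 (hM' x (interior_subset hx)))) (sq_nonneg _)

-- The two sides agree at `y = x`, and their difference is monotone in `y` on `(0, x]`.
theorem mul_div_sub_le_of_hasDerivAt_div (hU : ∀ x > 0, HasDerivAt U (U x / M x) x)
    (hM : ∀ x > 0, HasDerivAt M (M' x) x) (hU₀ : ∀ x > 0, 0 < U x) (hM₀ : ∀ x > 0, 0 < M x)
    (hM' : ∀ x > 0, 1 ≤ M' x) (hM'_anti : AntitoneOn M' (Ioi 0))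
    (hM_zero : Tendsto M (𝓝[>] 0) (𝓝 0)) {x y : ℝ} (hy : 0 < y) (hyx : y ≤ x) :
    x * M y / M x - y ≤ (1 - U y / U x) * (M x - x * M' x) := by
  have hx : 0 < x := hy.trans_le hyx
  have hN : 0 ≤ M x - x * M' x :=
    sub_nonneg.2 (mul_deriv_le_self_of_antitoneOn hM hM'_anti hM_zero hx)
  set G : ℝ → ℝ := fun t => x * M t / M x - t - (1 - U t / U x) * (M x - x * M' x) with hG
  have hderiv : ∀ t > 0, HasDerivAt G
      (x * M' t / M x - 1 - (0 - U t / M t / U x) * (M x - x * M' x)) t := fun t ht =>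
    ((((hM t ht).const_mul x).div_const (M x)).sub (hasDerivAt_id' t)).sub
      (((hasDerivAt_const t 1).sub ((hU t ht).div_const (U x))).mul_const _)
  have hpos : ∀ t ∈ Ioc 0 x,
      0 ≤ x * M' t / M x - 1 - (0 - U t / M t / U x) * (M x - x * M' x) := fun t ht => by
    have hratio : U x / M x ≤ U t / M t :=
      antitoneOn_div_of_hasDerivAt_div hU hM hU₀ hM₀ hM' ht.1 hx ht.2
    have hMx := hM₀ x hx
    have hUx := hU₀ x hx
    calc (0 : ℝ) = x * M' x / M x - 1 - (0 - U x / M x / U x) * (M x - x * M' x) := by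
          field_simp; ring
      _ ≤ x * M' t / M x - 1 - (0 - U t / M t / U x) * (M x - x * M' x) := by
          gcongr
          exact hM'_anti ht.1 hx ht.2
  have hmono : MonotoneOn G (Ioc 0 x) := monotoneOn_of_hasDerivWithinAt_nonneg (convex_Ioc 0 x)
    (fun t ht => (hderiv t ht.1).continuousAt.continuousWithinAt)
    (fun t ht => (hderiv t (interior_subset ht).1).hasDerivWithinAt)
    fun t ht => hpos t (interior_subset ht)
  have hle : G y ≤ G x := hmono ⟨hy, hyx⟩ ⟨hx, le_rfl⟩ hyx
  have hGx : G x = 0 := by simp [hG, (hM₀ x hx).ne', (hU₀ x hx).ne']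
  exact sub_nonpos.1 (hle.trans_eq hGx)

theorem strictMonoOn_of_hasDerivAt_div (hU : ∀ x > 0, HasDerivAt U (U x / M x) x)
    (hU₀ : ∀ x > 0, 0 < U x) (hM₀ : ∀ x > 0, 0 < M x) : StrictMonoOn U (Ioi 0) :=
  strictMonoOn_of_hasDerivWithinAt_pos (convex_Ioi 0)
    (fun x hx => (hU x hx).continuousAt.continuousWithinAt)
    (fun x hx => (hU x (interior_subset hx)).hasDerivWithinAt)
    fun x hx => div_pos (hU₀ x (interior_subset hx)) (hM₀ x (interior_subset hx))

theorem hasDerivAt_of_comp_eq_const_mul (hU : ∀ x > 0, HasDerivAt U (U x / M x) x)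
    (hU₀ : ∀ x > 0, 0 < U x) (hM₀ : ∀ x > 0, 0 < M x) (hu : u ≠ 0) (hY : ∀ x > 0, 0 < Y x)
    (hUY : ∀ x > 0, U (Y x) = u * U x) {x : ℝ} (hx : 0 < x) :
    HasDerivAt Y (M (Y x) / M x) x := by
  have hcomp : U ∘ Y =ᶠ[𝓝 x] fun x' => u * U x' :=
    eventually_of_mem (Ioi_mem_nhds hx) hUY
  have hderiv : HasDerivAt (fun x' => u * U x') (u * (U x / M x)) x := (hU x hx).const_mul u
  have hcont : ContinuousAt Y x :=
    continuousAt_of_strictMonoOn_comp (strictMonoOn_of_hasDerivAt_div hU hU₀ hM₀) ordConnected_Ioi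
      (eventually_of_mem (Ioi_mem_nhds hx) hY) (hderiv.continuousAt.congr hcomp.symm)
  have := (hU₀ x hx).ne'
  have := (hM₀ (Y x) (hY x hx)).ne'
  refine (HasDerivAt.of_comp_left hcont (hU (Y x) (hY x hx)) hderiv
    (div_pos (hU₀ _ (hY x hx)) (hM₀ _ (hY x hx))).ne' hcomp).congr_deriv ?_
  rw [hUY x hx]
  field_simp

theorem antitoneOn_div_of_comp_eq_const_mul (hU : ∀ x > 0, HasDerivAt U (U x / M x) x)
    (hM : ∀ x > 0, HasDerivAt M (M' x) x) (hU₀ : ∀ x > 0, 0 < U x) (hM₀ : ∀ x > 0, 0 < M x)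
    (hM' : ∀ x > 0, 1 ≤ M' x) (hM'_anti : AntitoneOn M' (Ioi 0))
    (hM_zero : Tendsto M (𝓝[>] 0) (𝓝 0)) (hu₀ : 0 < u) (hu₁ : u ≤ 1) (hY : ∀ x > 0, 0 < Y x)
    (hUY : ∀ x > 0, U (Y x) = u * U x) :
    AntitoneOn (fun x => (Y x + (1 - u) * M x) / x) (Ioi 0) := by
  have hderiv : ∀ x > 0, HasDerivAt (fun x => (Y x + (1 - u) * M x) / x)
      (((M (Y x) / M x + (1 - u) * M' x) * x - (Y x + (1 - u) * M x) * 1) / x ^ 2) x :=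
    fun x hx => ((hasDerivAt_of_comp_eq_const_mul hU hU₀ hM₀ hu₀.ne' hY hUY hx).add
      ((hM x hx).const_mul (1 - u))).fun_div (hasDerivAt_id' x) (ne_of_gt hx)
  refine antitoneOn_of_hasDerivWithinAt_nonpos (convex_Ioi 0)
    (fun x hx => (hderiv x hx).continuousAt.continuousWithinAt)
    (fun x hx => (hderiv x (interior_subset hx)).hasDerivWithinAt) fun x hx' => ?_
  have hx : 0 < x := interior_subset hx'
  have hYx : Y x ≤ x := by
    rw [← (strictMonoOn_of_hasDerivAt_div hU hU₀ hM₀).le_iff_le (hY x hx) hx, hUY x hx]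
    exact mul_le_of_le_one_left (hU₀ x hx).le hu₁
  have hkey := mul_div_sub_le_of_hasDerivAt_div hU hM hU₀ hM₀ hM' hM'_anti hM_zero (hY x hx) hYx
  rw [hUY x hx, mul_div_cancel_right₀ u (hU₀ x hx).ne'] at hkey
  refine div_nonpos_of_nonpos_of_nonneg ?_ (sq_nonneg x)
  calc (M (Y x) / M x + (1 - u) * M' x) * x - (Y x + (1 - u) * M x) * 1
      = x * M (Y x) / M x - Y x - (1 - u) * (M x - x * M' x) := by ring
    _ ≤ 0 := sub_nonpos.2 hkey

end Subadditivity

section UnitInterval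

variable {x z : ℝ}

theorem one_sub_mem_Ioo (hz : z ∈ Ioo (0 : ℝ) 1) : 1 - z ∈ Ioo (0 : ℝ) 1 :=
  ⟨sub_pos.2 hz.2, sub_lt_self 1 hz.1⟩

theorem sq_mem_Ioo (hz : z ∈ Ioo (0 : ℝ) 1) : z ^ 2 ∈ Ioo (0 : ℝ) 1 :=
  ⟨pow_pos hz.1 2, pow_lt_one₀ hz.1.le hz.2 two_ne_zero⟩

theorem mul_one_sub_pos (hz : z ∈ Ioo (0 : ℝ) 1) : 0 < z * (1 - z) :=
  mul_pos hz.1 (sub_pos.2 hz.2)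

theorem mul_one_sub_le (z : ℝ) : z * (1 - z) ≤ 1 / 4 := by
  linarith [sq_nonneg (2 * z - 1)]

theorem norm_lt_one_of_mem_Ioo (hz : z ∈ Ioo (0 : ℝ) 1) : ‖z‖ < 1 := by
  rw [norm_of_nonneg hz.1.le]
  exact hz.2

theorem sin_pi_mul_pos (hz : z ∈ Ioo (0 : ℝ) 1) : 0 < sin (π * z) :=
  sin_pos_of_pos_of_lt_pi (mul_pos pi_pos hz.1) (mul_lt_of_lt_one_right pi_pos hz.2)

theorem tendsto_one_sub_nhdsGT_zero : Tendsto (fun z : ℝ => 1 - z) (𝓝[>] 0) (𝓝[<] 1) := by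
  refine tendsto_nhdsWithin_iff.2 ⟨?_, eventually_mem_nhdsWithin.mono fun z hz => ?_⟩
  · have hcont : Continuous fun z : ℝ => 1 - z := by fun_prop
    simpa using (hcont.tendsto 0).mono_left nhdsWithin_le_nhds
  · exact sub_lt_self (1 : ℝ) hz

theorem tendsto_one_sub_nhdsLT_one : Tendsto (fun z : ℝ => 1 - z) (𝓝[<] 1) (𝓝[>] 0) := by
  refine tendsto_nhdsWithin_iff.2
    ⟨?_, eventually_mem_nhdsWithin.mono fun z hz => sub_pos.2 (mem_Iio.1 hz)⟩
  have hcont : Continuous fun z : ℝ => 1 - z := by fun_prop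
  simpa using (hcont.tendsto 1).mono_left nhdsWithin_le_nhds

theorem exp_neg_mem_Ioo (hx : 0 < x) : exp (-x) ∈ Ioo (0 : ℝ) 1 :=
  ⟨exp_pos _, exp_lt_one_iff.2 (neg_neg_of_pos hx)⟩

theorem exp_neg_sq_mem_Ioo (hx : 0 < x) : exp (-x) ^ 2 ∈ Ioo (0 : ℝ) 1 :=
  sq_mem_Ioo (exp_neg_mem_Ioo hx)

theorem hasDerivAt_exp_neg_sq (x : ℝ) :
    HasDerivAt (fun x => exp (-x) ^ 2) (-2 * exp (-x) ^ 2) x := by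
  refine ((hasDerivAt_neg x).exp.fun_pow 2).congr_deriv ?_
  push_cast
  ring

theorem tendsto_exp_neg_sq_nhdsGT_zero :
    Tendsto (fun x : ℝ => exp (-x) ^ 2) (𝓝[>] 0) (𝓝[<] 1) := by
  refine tendsto_nhdsWithin_iff.2
    ⟨?_, eventually_mem_nhdsWithin.mono fun x hx => (exp_neg_sq_mem_Ioo hx).2⟩
  simpa using (hasDerivAt_exp_neg_sq 0).continuousAt.mono_left nhdsWithin_le_nhds

theorem tendsto_exp_neg_sq_atTop : Tendsto (fun x : ℝ => exp (-x) ^ 2) atTop (𝓝[>] 0) :=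
  tendsto_nhdsWithin_iff.2 ⟨by simpa using tendsto_exp_neg_atTop_nhds_zero.pow 2,
    Eventually.of_forall fun x => pow_pos (exp_pos _) 2⟩

end UnitInterval

section PowerSeries

theorem summable_mul_pow_of_norm_le {𝕜 : Type*} [NormedRing 𝕜] [NormOneClass 𝕜] [CompleteSpace 𝕜]
    {b : ℕ → 𝕜} {C : ℝ} (hb : ∀ n, ‖b n‖ ≤ C) {z : 𝕜} (hz : ‖z‖ < 1) :
    Summable fun n => b n * z ^ n := by
  refine .of_norm_bounded ((summable_geometric_of_lt_one (norm_nonneg z) hz).mul_left C)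
    fun n => ?_
  calc ‖b n * z ^ n‖ ≤ ‖b n‖ * ‖z ^ n‖ := norm_mul_le _ _
    _ ≤ C * ‖z‖ ^ n := mul_le_mul (hb n) (norm_pow_le z n) (norm_nonneg _)
      ((norm_nonneg _).trans (hb n))

theorem hasDerivAt_tsum_div_succ_mul_pow {𝕜 : Type*} [RCLike 𝕜] {b : ℕ → 𝕜} {C : ℝ}
    (hb : ∀ n, ‖b n‖ ≤ C) {z : 𝕜} (hz : ‖z‖ < 1) :
    HasDerivAt (fun w => ∑' n, b n / (n + 1) * w ^ (n + 1)) (∑' n, b n * z ^ n) z := by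
  obtain ⟨ρ, hzρ, hρ⟩ := exists_between hz
  have hρ₀ : 0 < ρ := (norm_nonneg z).trans_lt hzρ
  refine hasDerivAt_tsum_of_isPreconnected (g := fun n w => b n / (n + 1) * w ^ (n + 1))
    (g' := fun n w => b n * w ^ n) ((summable_geometric_of_lt_one hρ₀.le hρ).mul_left C)
    Metric.isOpen_ball (convex_ball (0 : 𝕜) ρ).isPreconnected (fun n w _ => ?_)
    (fun n w hw => ?_) (Metric.mem_ball_self hρ₀) ?_ (mem_ball_zero_iff.2 hzρ)
  · refine ((hasDerivAt_pow (n + 1) w).const_mul (b n / (n + 1))).congr_deriv ?_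
    have : (n + 1 : 𝕜) ≠ 0 := n.cast_add_one_ne_zero
    push_cast
    field_simp
  · rw [norm_mul, norm_pow]
    have := (mem_ball_zero_iff.1 hw).le
    gcongr
    · exact (norm_nonneg _).trans (hb n)
    · exact hb n
  · simp

theorem tendsto_tsum_mul_pow_atTop {b : ℕ → ℝ} (hb : ∀ n, 0 ≤ b n)
    (hsum : ∀ z ∈ Ioo (0 : ℝ) 1, Summable fun n => b n * z ^ n) (hdiv : ¬Summable b) :
    Tendsto (fun z => ∑' n, b n * z ^ n) (𝓝[<] 1) atTop := by
  rw [not_summable_iff_tendsto_nat_atTop_of_nonneg hb] at hdiv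
  refine tendsto_atTop.2 fun C => ?_
  obtain ⟨N, hN⟩ := (hdiv.eventually_gt_atTop C).exists
  have hpartial : Tendsto (fun z : ℝ => ∑ n ∈ Finset.range N, b n * z ^ n) (𝓝[<] 1)
      (𝓝 (∑ n ∈ Finset.range N, b n)) := by
    have hcont : Continuous fun z : ℝ => ∑ n ∈ Finset.range N, b n * z ^ n := by fun_prop
    simpa using (hcont.tendsto 1).mono_left nhdsWithin_le_nhds
  filter_upwards [hpartial.eventually (eventually_gt_nhds hN), Ioo_mem_nhdsLT one_pos] with z hCz hz
  exact hCz.le.trans ((hsum z hz).sum_le_tsum _ fun n _ => mul_nonneg (hb n) (pow_nonneg hz.1.le n))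

theorem succ_mul_pow_mul_one_sub_le {z : ℝ} (hz₀ : 0 ≤ z) (hz₁ : z ≤ 1) (n : ℕ) :
    (n + 1) * z ^ n * (1 - z) ≤ 1 - z ^ (n + 1) := by
  rw [← mul_neg_geom_sum z (n + 1), mul_comm]
  refine mul_le_mul_of_nonneg_left ?_ (sub_nonneg.2 hz₁)
  calc (n + 1) * z ^ n = ∑ _i ∈ Finset.range (n + 1), z ^ n := by simp
    _ ≤ ∑ i ∈ Finset.range (n + 1), z ^ i := Finset.sum_le_sum fun i hi =>
      pow_le_pow_of_le_one hz₀ hz₁ (Nat.lt_succ_iff.1 (Finset.mem_range.1 hi))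

end PowerSeries

section HypergeometricCoefficients

/-- The Taylor coefficients of Gauss's hypergeometric function `₂F₁(a, 1 - a; 1; ·)`. -/
noncomputable def hypCoeff (a : ℝ) (n : ℕ) : ℝ :=
  poch a n * poch (1 - a) n / (n.factorial : ℝ) ^ 2

variable {a : ℝ} {n : ℕ}

theorem poch_succ (x : ℝ) (n : ℕ) : poch x (n + 1) = poch x n * (x + n) :=
  ascPochhammer_succ_eval n x

theorem poch_eq_prod_range (x : ℝ) (n : ℕ) : poch x n = ∏ j ∈ Finset.range n, (x + j) := by
  induction n with
  | zero => simp [poch]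
  | succ n ih => rw [poch_succ, ih, Finset.prod_range_succ]

@[simp]
theorem hypCoeff_zero (a : ℝ) : hypCoeff a 0 = 1 := by simp [hypCoeff, poch]

theorem succ_mul_hypCoeff_succ (a : ℝ) (n : ℕ) :
    (n + 1) * hypCoeff a (n + 1) = n * hypCoeff a n + a * (1 - a) * hypCoeff a n / (n + 1) := by
  have : (n + 1 : ℝ) ≠ 0 := n.cast_add_one_ne_zero
  rw [hypCoeff, hypCoeff, poch_succ, poch_succ, Nat.factorial_succ]
  push_cast
  field_simp
  ring

theorem hypCoeff_pos (ha : a ∈ Ioo (0 : ℝ) 1) (n : ℕ) : 0 < hypCoeff a n :=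
  div_pos (mul_pos (ascPochhammer_pos n a ha.1) (ascPochhammer_pos n _ (sub_pos.2 ha.2)))
    (by positivity)

theorem monotone_mul_hypCoeff (ha : a ∈ Ioo (0 : ℝ) 1) :
    Monotone fun n : ℕ => n * hypCoeff a n :=
  monotone_nat_of_le_succ fun n => by
    rw [Nat.cast_succ, succ_mul_hypCoeff_succ]
    have := mul_one_sub_pos ha
    have := hypCoeff_pos ha n
    exact le_add_of_nonneg_right (by positivity)

theorem hypCoeff_le_one (ha : a ∈ Ioo (0 : ℝ) 1) (n : ℕ) : hypCoeff a n ≤ 1 := by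
  induction n with
  | zero => simp
  | succ n ih =>
    have hpos := (hypCoeff_pos ha n).le
    have hmul : a * (1 - a) * hypCoeff a n ≤ 1 :=
      mul_le_one₀ (by linarith [mul_one_sub_le a]) hpos ih
    refine le_of_mul_le_mul_left ?_ (n.cast_add_one_pos (α := ℝ))
    calc (n + 1) * hypCoeff a (n + 1) = n * hypCoeff a n + a * (1 - a) * hypCoeff a n / (n + 1) :=
          succ_mul_hypCoeff_succ a n
      _ ≤ n * 1 + 1 := by
          gcongr
          exact div_le_one_of_le₀ (hmul.trans (by simp)) (by positivity)
      _ = (n + 1) * 1 := by ring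

theorem norm_hypCoeff_le_one (ha : a ∈ Ioo (0 : ℝ) 1) (n : ℕ) : ‖hypCoeff a n‖ ≤ 1 := by
  rw [norm_of_nonneg (hypCoeff_pos ha n).le]
  exact hypCoeff_le_one ha n

theorem GammaSeq_mul_GammaSeq_one_sub (ha : a ∈ Ioo (0 : ℝ) 1) (hn : n ≠ 0) :
    GammaSeq a n * GammaSeq (1 - a) n = n / (n + 1) / ((n + 1) * hypCoeff a (n + 1)) := by
  have hn₀ : (0 : ℝ) < n := Nat.cast_pos.2 (Nat.pos_of_ne_zero hn)
  have hpow : (n : ℝ) ^ a * (n : ℝ) ^ (1 - a) = n := by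
    rw [← rpow_add hn₀, add_sub_cancel, rpow_one]
  have hpoch : ∀ x : ℝ, 0 < x → poch x (n + 1) ≠ 0 := fun x hx => (ascPochhammer_pos _ x hx).ne'
  have h₁ := hpoch a ha.1
  have h₂ := hpoch (1 - a) (sub_pos.2 ha.2)
  rw [GammaSeq, GammaSeq, ← poch_eq_prod_range, ← poch_eq_prod_range, hypCoeff, Nat.factorial_succ]
  push_cast
  calc _ = (n : ℝ) ^ a * (n : ℝ) ^ (1 - a) * (n.factorial : ℝ) ^ 2 /
        (poch a (n + 1) * poch (1 - a) (n + 1)) := by ring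
    _ = _ := by rw [hpow]; field_simp

theorem tendsto_mul_hypCoeff (ha : a ∈ Ioo (0 : ℝ) 1) :
    Tendsto (fun n : ℕ => n * hypCoeff a n) atTop (𝓝 (sin (π * a) / π)) := by
  have hΓ : Tendsto (fun n => GammaSeq a n * GammaSeq (1 - a) n) atTop (𝓝 (π / sin (π * a))) :=
    Gamma_mul_Gamma_one_sub a ▸ (GammaSeq_tendsto_Gamma a).mul (GammaSeq_tendsto_Gamma (1 - a))
  have hquot := (tendsto_natCast_div_add_atTop (1 : ℝ)).div hΓ
    (div_pos pi_pos (sin_pi_mul_pos ha)).ne'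
  rw [one_div_div] at hquot
  rw [← tendsto_add_atTop_iff_nat 1]
  refine hquot.congr' ((eventually_ne_atTop 0).mono fun n hn => ?_)
  have := hypCoeff_pos ha (n + 1)
  have : (n : ℝ) ≠ 0 := Nat.cast_ne_zero.2 hn
  rw [Pi.div_apply, GammaSeq_mul_GammaSeq_one_sub ha hn]
  push_cast
  field_simp

theorem mul_hypCoeff_le (ha : a ∈ Ioo (0 : ℝ) 1) (n : ℕ) :
    n * hypCoeff a n ≤ sin (π * a) / π :=
  (monotone_mul_hypCoeff ha).ge_of_tendsto (tendsto_mul_hypCoeff ha) n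

theorem not_summable_hypCoeff (ha : a ∈ Ioo (0 : ℝ) 1) : ¬Summable (hypCoeff a) := by
  have hlower : ∀ n : ℕ, a * (1 - a) * (1 / ((n + 1 : ℕ) : ℝ)) ≤ hypCoeff a (n + 1) := fun n => by
    have hone : hypCoeff a 1 = a * (1 - a) := by simpa using succ_mul_hypCoeff_succ a 0
    rw [mul_one_div, div_le_iff₀' (by positivity), ← hone]
    simpa using monotone_mul_hypCoeff ha (Nat.le_add_left 1 n)
  intro hsum
  have hharm : Summable fun n : ℕ => a * (1 - a) * (1 / ((n + 1 : ℕ) : ℝ)) :=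
    .of_nonneg_of_le (fun n => by have := mul_one_sub_pos ha; positivity) hlower
      ((summable_nat_add_iff 1).2 hsum)
  rw [summable_mul_left_iff (mul_one_sub_pos ha).ne',
    summable_nat_add_iff 1 (f := fun n : ℕ => 1 / (n : ℝ))] at hharm
  exact Real.not_summable_one_div_natCast hharm

theorem mul_hypCoeff_div_succ_pos (ha : a ∈ Ioo (0 : ℝ) 1) (n : ℕ) :
    0 < a * (1 - a) * hypCoeff a n / (n + 1) :=
  div_pos (mul_pos (mul_one_sub_pos ha) (hypCoeff_pos ha n)) n.cast_add_one_pos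

theorem hasSum_mul_hypCoeff_div_succ (ha : a ∈ Ioo (0 : ℝ) 1) :
    HasSum (fun n : ℕ => a * (1 - a) * hypCoeff a n / (n + 1)) (sin (π * a) / π) := by
  refine (hasSum_iff_tendsto_nat_of_nonneg (fun n => (mul_hypCoeff_div_succ_pos ha n).le) _).2
    ((tendsto_mul_hypCoeff ha).congr fun N => ?_)
  calc N * hypCoeff a N = ∑ n ∈ Finset.range N,
        (((n + 1 : ℕ) : ℝ) * hypCoeff a (n + 1) - n * hypCoeff a n) := by
        rw [Finset.sum_range_sub fun n : ℕ => (n : ℝ) * hypCoeff a n]; simp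
    _ = _ := Finset.sum_congr rfl fun n _ => by
        rw [Nat.cast_succ, succ_mul_hypCoeff_succ, add_sub_cancel_left]

end HypergeometricCoefficients

section HypergeometricFunction

variable {a z : ℝ}

/-- Gauss's hypergeometric function `₂F₁(a, 1 - a; 1; z)`: up to the factor `π / 2`, the complete
elliptic integral `Ka a` as a function of the squared modulus. For `0 < a < 1` it takes the junk
value `0` at `1 ≤ z`. -/
noncomputable def hypF (a z : ℝ) : ℝ := ordinaryHypergeometric a (1 - a) 1 z

/-- The flux `z (1 - z) F'(z)` of `F = hypF a`, in terms of which the hypergeometric equation for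
`F` reads `(z (1 - z) F')' = a (1 - a) F`. It is encoded by its power series. -/
noncomputable def hypFlux (a z : ℝ) : ℝ :=
  ∑' n : ℕ, a * (1 - a) * hypCoeff a n / (n + 1) * z ^ (n + 1)

/-- The factor of the derivative of `mA a` that has to be shown monotone. For `a = 1 / 2` it is
`2 / π` times the complete elliptic integral of the second kind as a function of the squared
modulus. -/
noncomputable def hypE (a z : ℝ) : ℝ := (1 - z) * hypF a z + 2 * hypFlux a z

theorem hypF_eq_tsum (a z : ℝ) : hypF a z = ∑' n : ℕ, hypCoeff a n * z ^ n := by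
  rw [hypF, ordinaryHypergeometric_eq_tsum]
  refine tsum_congr fun n => ?_
  rw [ascPochhammer_eval_one, hypCoeff, poch, poch, smul_eq_mul]
  ring

@[simp]
theorem hypF_zero (a : ℝ) : hypF a 0 = 1 := ordinaryHypergeometric_zero ..

theorem summable_hypCoeff_mul_pow (ha : a ∈ Ioo (0 : ℝ) 1) (hz : ‖z‖ < 1) :
    Summable fun n => hypCoeff a n * z ^ n :=
  summable_mul_pow_of_norm_le (norm_hypCoeff_le_one ha) hz

theorem hypF_eq_zero_of_one_le (ha : a ∈ Ioo (0 : ℝ) 1) (hz : 1 ≤ z) : hypF a z = 0 := by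
  rw [hypF_eq_tsum]
  refine tsum_eq_zero_of_not_summable fun hsum => not_summable_hypCoeff ha ?_
  exact hsum.of_nonneg_of_le (fun n => (hypCoeff_pos ha n).le)
    fun n => le_mul_of_one_le_right (hypCoeff_pos ha n).le (one_le_pow₀ hz)

theorem norm_succ_mul_hypCoeff_succ_le (ha : a ∈ Ioo (0 : ℝ) 1) (n : ℕ) :
    ‖(n + 1) * hypCoeff a (n + 1)‖ ≤ sin (π * a) / π := by
  rw [norm_of_nonneg (mul_nonneg (by positivity) (hypCoeff_pos ha _).le)]
  exact_mod_cast mul_hypCoeff_le ha (n + 1)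

theorem hypF_eq_one_add_tsum (ha : a ∈ Ioo (0 : ℝ) 1) (hz : ‖z‖ < 1) :
    hypF a z = 1 + ∑' n : ℕ, (n + 1) * hypCoeff a (n + 1) / (n + 1) * z ^ (n + 1) := by
  rw [hypF_eq_tsum, (summable_hypCoeff_mul_pow ha hz).tsum_eq_zero_add, hypCoeff_zero, pow_zero,
    one_mul]
  congr 1
  refine tsum_congr fun n => ?_
  rw [mul_div_cancel_left₀ _ n.cast_add_one_ne_zero]

theorem mul_one_sub_mul_tsum_hypCoeff (ha : a ∈ Ioo (0 : ℝ) 1) (hz : ‖z‖ < 1) :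
    z * (1 - z) * ∑' n : ℕ, (n + 1) * hypCoeff a (n + 1) * z ^ n = hypFlux a z := by
  have hsum : Summable fun n : ℕ => (n + 1) * hypCoeff a (n + 1) * z ^ n :=
    summable_mul_pow_of_norm_le (norm_succ_mul_hypCoeff_succ_le ha) hz
  have hshift : HasSum (fun n : ℕ => n * hypCoeff a n * z ^ n)
      (z * ∑' n : ℕ, (n + 1) * hypCoeff a (n + 1) * z ^ n) := by
    rw [← hasSum_nat_add_iff' 1]
    simpa [pow_succ', mul_left_comm z] using hsum.hasSum.mul_left z
  have hflux := (hsum.hasSum.mul_left z).sub (hshift.mul_left z)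
  calc _ = z * ∑' n : ℕ, (n + 1) * hypCoeff a (n + 1) * z ^ n
        - z * (z * ∑' n : ℕ, (n + 1) * hypCoeff a (n + 1) * z ^ n) := by ring
    _ = _ := hflux.tsum_eq.symm
    _ = _ := tsum_congr fun n => by rw [succ_mul_hypCoeff_succ]; ring

theorem hasDerivAt_hypFlux (ha : a ∈ Ioo (0 : ℝ) 1) (hz : ‖z‖ < 1) :
    HasDerivAt (hypFlux a) (a * (1 - a) * hypF a z) z := by
  have hbound : ∀ n, ‖a * (1 - a) * hypCoeff a n‖ ≤ ‖a * (1 - a)‖ := fun n => by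
    rw [norm_mul]
    exact mul_le_of_le_one_right (norm_nonneg _) (norm_hypCoeff_le_one ha n)
  refine (hasDerivAt_tsum_div_succ_mul_pow hbound hz).congr_deriv ?_
  rw [hypF_eq_tsum, ← tsum_mul_left]
  exact tsum_congr fun n => mul_assoc _ _ _

theorem hasDerivAt_hypF_tsum (ha : a ∈ Ioo (0 : ℝ) 1) (hz : ‖z‖ < 1) :
    HasDerivAt (hypF a) (∑' n : ℕ, (n + 1) * hypCoeff a (n + 1) * z ^ n) z := by
  refine ((hasDerivAt_tsum_div_succ_mul_pow (norm_succ_mul_hypCoeff_succ_le ha) hz).const_add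
    1).congr_of_eventuallyEq ?_
  filter_upwards [Metric.isOpen_ball.mem_nhds (mem_ball_zero_iff.2 hz)] with w hw
  exact hypF_eq_one_add_tsum ha (mem_ball_zero_iff.1 hw)

theorem hasDerivAt_hypF (ha : a ∈ Ioo (0 : ℝ) 1) (hz : z ∈ Ioo (0 : ℝ) 1) :
    HasDerivAt (hypF a) (hypFlux a z / (z * (1 - z))) z := by
  refine (hasDerivAt_hypF_tsum ha (norm_lt_one_of_mem_Ioo hz)).congr_deriv ?_
  rw [← mul_one_sub_mul_tsum_hypCoeff ha (norm_lt_one_of_mem_Ioo hz),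
    mul_div_cancel_left₀ _ (mul_one_sub_pos hz).ne']

theorem monotoneOn_hypF (ha : a ∈ Ioo (0 : ℝ) 1) : MonotoneOn (hypF a) (Ico 0 1) :=
  fun z hz w hw hzw => by
  have hnorm : ∀ x ∈ Ico (0 : ℝ) 1, ‖x‖ < 1 := fun x hx => (norm_of_nonneg hx.1).trans_lt hx.2
  rw [hypF_eq_tsum, hypF_eq_tsum]
  exact (summable_hypCoeff_mul_pow ha (hnorm z hz)).tsum_le_tsum
    (fun n => mul_le_mul_of_nonneg_left (pow_le_pow_left₀ hz.1 hzw n) (hypCoeff_pos ha n).le)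
    (summable_hypCoeff_mul_pow ha (hnorm w hw))

theorem one_le_hypF (ha : a ∈ Ioo (0 : ℝ) 1) (hz : z ∈ Ico (0 : ℝ) 1) : 1 ≤ hypF a z :=
  hypF_zero a ▸ monotoneOn_hypF ha ⟨le_rfl, one_pos⟩ hz hz.1

theorem hypF_pos (ha : a ∈ Ioo (0 : ℝ) 1) (hz : z ∈ Ioo (0 : ℝ) 1) : 0 < hypF a z :=
  one_pos.trans_le (one_le_hypF ha (Ioo_subset_Ico_self hz))

theorem summable_hypFlux (ha : a ∈ Ioo (0 : ℝ) 1) (hz : ‖z‖ < 1) :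
    Summable fun n : ℕ => a * (1 - a) * hypCoeff a n / (n + 1) * z ^ (n + 1) := by
  have hbound : ∀ n : ℕ, ‖a * (1 - a) * hypCoeff a n / (n + 1)‖ ≤ sin (π * a) / π := fun n => by
    rw [norm_of_nonneg (mul_hypCoeff_div_succ_pos ha n).le]
    exact le_hasSum (hasSum_mul_hypCoeff_div_succ ha) n fun k _ =>
      (mul_hypCoeff_div_succ_pos ha k).le
  exact ((summable_mul_pow_of_norm_le hbound hz).mul_left z).congr fun n => by ring

theorem hypFlux_nonneg (ha : a ∈ Ioo (0 : ℝ) 1) (hz : 0 ≤ z) : 0 ≤ hypFlux a z :=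
  tsum_nonneg fun n => mul_nonneg (mul_hypCoeff_div_succ_pos ha n).le (pow_nonneg hz _)

theorem hypFlux_le (ha : a ∈ Ioo (0 : ℝ) 1) (hz : z ∈ Ioo (0 : ℝ) 1) :
    hypFlux a z ≤ a * (1 - a) * z * hypF a z := by
  have hz' := norm_lt_one_of_mem_Ioo hz
  rw [hypF_eq_tsum, ← tsum_mul_left]
  refine (summable_hypFlux ha hz').tsum_le_tsum (fun n => ?_)
    ((summable_hypCoeff_mul_pow ha hz').mul_left _)
  have := mul_pos (mul_one_sub_pos ha) (hypCoeff_pos ha n)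
  calc _ ≤ a * (1 - a) * hypCoeff a n * z ^ (n + 1) :=
        mul_le_mul_of_nonneg_right (div_le_self this.le (by simp)) (pow_nonneg hz.1.le _)
    _ = _ := by ring

theorem tendsto_hypFlux_one (ha : a ∈ Ioo (0 : ℝ) 1) :
    Tendsto (hypFlux a) (𝓝[<] 1) (𝓝 (sin (π * a) / π)) := by
  have habel := tendsto_tsum_powerSeries_nhdsWithin_lt
    (hasSum_mul_hypCoeff_div_succ ha).tendsto_sum_nat
  have hid : Tendsto (fun z : ℝ => z) (𝓝[<] 1) (𝓝 1) := nhdsWithin_le_nhds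
  rw [← one_mul (sin (π * a) / π)]
  refine (hid.mul habel).congr fun z => ?_
  rw [hypFlux, ← tsum_mul_left]
  exact tsum_congr fun n => by ring

theorem one_sub_mul_hypF_le (ha : a ∈ Ioo (0 : ℝ) 1) (hz : z ∈ Ioo (0 : ℝ) 1) :
    a * (1 - a) * ((1 - z) * hypF a z) ≤ sin (π * a) / π - hypFlux a z := by
  have hz' := norm_lt_one_of_mem_Ioo hz
  have hrhs := (hasSum_mul_hypCoeff_div_succ ha).sub (summable_hypFlux ha hz').hasSum
  have hlhs := ((summable_hypCoeff_mul_pow ha hz').hasSum.mul_left (1 - z)).mul_left (a * (1 - a))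
  rw [hypF_eq_tsum]
  refine hasSum_le (fun n => ?_) hlhs hrhs
  have hn : (n + 1 : ℝ) ≠ 0 := n.cast_add_one_ne_zero
  calc _ = a * (1 - a) * hypCoeff a n / (n + 1) * ((n + 1) * z ^ n * (1 - z)) := by field_simp
    _ ≤ a * (1 - a) * hypCoeff a n / (n + 1) * (1 - z ^ (n + 1)) :=
      mul_le_mul_of_nonneg_left (succ_mul_pow_mul_one_sub_le hz.1.le hz.2.le n)
        (mul_hypCoeff_div_succ_pos ha n).le
    _ = _ := by ring

theorem tendsto_one_sub_mul_hypF (ha : a ∈ Ioo (0 : ℝ) 1) :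
    Tendsto (fun z => (1 - z) * hypF a z) (𝓝[<] 1) (𝓝 0) := by
  have hupper : Tendsto (fun z => (sin (π * a) / π - hypFlux a z) / (a * (1 - a))) (𝓝[<] 1)
      (𝓝 0) := by
    simpa using ((tendsto_const_nhds (x := sin (π * a) / π)).sub
      (tendsto_hypFlux_one ha)).div_const (a * (1 - a))
  refine squeeze_zero' ?_ ?_ hupper <;> filter_upwards [Ioo_mem_nhdsLT one_pos] with z hz
  · exact mul_nonneg (sub_nonneg.2 hz.2.le) (hypF_pos ha hz).le
  · rw [le_div_iff₀' (mul_one_sub_pos ha)]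
    exact one_sub_mul_hypF_le ha hz

theorem tendsto_hypF_atTop (ha : a ∈ Ioo (0 : ℝ) 1) : Tendsto (hypF a) (𝓝[<] 1) atTop :=
  (tendsto_tsum_mul_pow_atTop (fun n => (hypCoeff_pos ha n).le)
    (fun _ hz => summable_hypCoeff_mul_pow ha (norm_lt_one_of_mem_Ioo hz))
    (not_summable_hypCoeff ha)).congr fun z => (hypF_eq_tsum a z).symm

theorem tendsto_hypF_zero (ha : a ∈ Ioo (0 : ℝ) 1) : Tendsto (hypF a) (𝓝[>] 0) (𝓝 1) :=
  hypF_zero a ▸ (hasDerivAt_hypF_tsum ha (by simp)).continuousAt.mono_left nhdsWithin_le_nhds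

theorem hasDerivAt_hypF_one_sub (ha : a ∈ Ioo (0 : ℝ) 1) (hz : z ∈ Ioo (0 : ℝ) 1) :
    HasDerivAt (fun z => hypF a (1 - z)) (-(hypFlux a (1 - z) / (z * (1 - z)))) z := by
  refine ((hasDerivAt_hypF ha (one_sub_mem_Ioo hz)).comp_const_sub 1 z).congr_deriv ?_
  rw [sub_sub_cancel, mul_comm z]

theorem hasDerivAt_hypFlux_one_sub (ha : a ∈ Ioo (0 : ℝ) 1) (hz : z ∈ Ioo (0 : ℝ) 1) :
    HasDerivAt (fun z => hypFlux a (1 - z)) (-(a * (1 - a) * hypF a (1 - z))) z :=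
  (hasDerivAt_hypFlux ha (norm_lt_one_of_mem_Ioo (one_sub_mem_Ioo hz))).comp_const_sub 1 z

/-- The Wronskian of the solutions `F(z)` and `F(1 - z)` of the hypergeometric equation; for
`a = 1 / 2` this is Legendre's relation. -/
noncomputable def hypWronskian (a z : ℝ) : ℝ :=
  hypFlux a z * hypF a (1 - z) + hypF a z * hypFlux a (1 - z)

theorem hasDerivAt_hypWronskian (ha : a ∈ Ioo (0 : ℝ) 1) (hz : z ∈ Ioo (0 : ℝ) 1) :
    HasDerivAt (hypWronskian a) 0 z := by
  refine (((hasDerivAt_hypFlux ha (norm_lt_one_of_mem_Ioo hz)).mul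
    (hasDerivAt_hypF_one_sub ha hz)).add
    ((hasDerivAt_hypF ha hz).mul (hasDerivAt_hypFlux_one_sub ha hz))).congr_deriv ?_
  ring

theorem tendsto_hypWronskian_zero (ha : a ∈ Ioo (0 : ℝ) 1) :
    Tendsto (hypWronskian a) (𝓝[>] 0) (𝓝 (sin (π * a) / π)) := by
  have hmem : ∀ᶠ z : ℝ in 𝓝[>] 0, z ∈ Ioo (0 : ℝ) 1 := Ioo_mem_nhdsGT one_pos
  have hprod : Tendsto (fun z => a * (1 - a) * (hypF a z * ((1 - (1 - z)) * hypF a (1 - z))))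
      (𝓝[>] 0) (𝓝 0) := by
    simpa using ((tendsto_hypF_zero ha).mul
      ((tendsto_one_sub_mul_hypF ha).comp tendsto_one_sub_nhdsGT_zero)).const_mul (a * (1 - a))
  have hfst : Tendsto (fun z => hypFlux a z * hypF a (1 - z)) (𝓝[>] 0) (𝓝 0) := by
    refine squeeze_zero' ?_ ?_ hprod <;> filter_upwards [hmem] with z hz
    · exact mul_nonneg (hypFlux_nonneg ha hz.1.le) (hypF_pos ha (one_sub_mem_Ioo hz)).le
    · calc hypFlux a z * hypF a (1 - z) ≤ a * (1 - a) * z * hypF a z * hypF a (1 - z) :=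
            mul_le_mul_of_nonneg_right (hypFlux_le ha hz) (hypF_pos ha (one_sub_mem_Ioo hz)).le
        _ = _ := by ring
  have hsnd := (tendsto_hypF_zero ha).mul
    ((tendsto_hypFlux_one ha).comp tendsto_one_sub_nhdsGT_zero)
  have hadd := hfst.add hsnd
  rwa [zero_add, one_mul] at hadd

theorem hypWronskian_eq (ha : a ∈ Ioo (0 : ℝ) 1) (hz : z ∈ Ioo (0 : ℝ) 1) :
    hypWronskian a z = sin (π * a) / π := by
  have hconst : ∀ w ∈ Ioo (0 : ℝ) 1, hypWronskian a w = hypWronskian a z := fun w hw =>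
    isOpen_Ioo.is_const_of_deriv_eq_zero isPreconnected_Ioo
      (fun x hx => (hasDerivAt_hypWronskian ha hx).differentiableAt.differentiableWithinAt)
      (fun x hx => (hasDerivAt_hypWronskian ha hx).deriv) hw hz
  exact tendsto_nhds_unique
    (tendsto_const_nhds.congr' (eventually_of_mem (Ioo_mem_nhdsGT one_pos)
      fun w hw => (hconst w hw).symm))
    (tendsto_hypWronskian_zero ha)

theorem hypE_pos (ha : a ∈ Ioo (0 : ℝ) 1) (hz : z ∈ Ioo (0 : ℝ) 1) : 0 < hypE a z :=
  add_pos_of_pos_of_nonneg (mul_pos (sub_pos.2 hz.2) (hypF_pos ha hz))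
    (mul_nonneg two_pos.le (hypFlux_nonneg ha hz.1.le))

theorem antitoneOn_hypE (ha : a ∈ Ioo (0 : ℝ) 1) : AntitoneOn (hypE a) (Ioo 0 1) := by
  have hderiv : ∀ z ∈ Ioo (0 : ℝ) 1, HasDerivAt (hypE a)
      (hypFlux a z / z - (1 - 2 * (a * (1 - a))) * hypF a z) z := fun z hz => by
    refine ((((hasDerivAt_id' z).const_sub 1).mul (hasDerivAt_hypF ha hz)).add
      ((hasDerivAt_hypFlux ha (norm_lt_one_of_mem_Ioo hz)).const_mul 2)).congr_deriv ?_
    have := hz.1.ne'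
    have := (sub_pos.2 hz.2).ne'
    field_simp
    ring
  refine antitoneOn_of_hasDerivWithinAt_nonpos (convex_Ioo 0 1)
    (fun z hz => (hderiv z hz).continuousAt.continuousWithinAt)
    (fun z hz => (hderiv z (interior_subset hz)).hasDerivWithinAt) fun z hz' => ?_
  have hz : z ∈ Ioo (0 : ℝ) 1 := interior_subset hz'
  have hflux : hypFlux a z / z ≤ a * (1 - a) * hypF a z := by
    rw [div_le_iff₀ hz.1]
    exact (hypFlux_le ha hz).trans_eq (by ring)
  calc _ ≤ (3 * (a * (1 - a)) - 1) * hypF a z := by linarith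
    _ ≤ 0 := mul_nonpos_of_nonpos_of_nonneg (by linarith [mul_one_sub_le a]) (hypF_pos ha hz).le

end HypergeometricFunction

section EllipticIntegrals

variable {a r x z K : ℝ}

theorem Ka_eq_hypF (a r : ℝ) : Ka a r = π / 2 * hypF a (r ^ 2) := by
  rw [Ka, hypF_eq_tsum]
  simp only [pow_mul, hypCoeff]

theorem muG_eq_hypF (a : ℝ) (hr : r ^ 2 ≤ 1) :
    muG a r = π / (2 * sin (π * a)) * (hypF a (1 - r ^ 2) / hypF a (r ^ 2)) := by
  rw [muG, Ka_eq_hypF, Ka_eq_hypF, sq_sqrt (sub_nonneg.2 hr),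
    mul_div_mul_left _ _ (by positivity)]

theorem mA_eq_hypF (a : ℝ) (hr : r ^ 2 ≤ 1) :
    mA a r = π / (2 * sin (π * a)) * ((1 - r ^ 2) * hypF a (r ^ 2) * hypF a (1 - r ^ 2)) := by
  rw [mA, Ka_eq_hypF, Ka_eq_hypF, sq_sqrt (sub_nonneg.2 hr)]
  field_simp

theorem hasDerivAt_hypF_one_sub_div_hypF (ha : a ∈ Ioo (0 : ℝ) 1) (hz : z ∈ Ioo (0 : ℝ) 1) :
    HasDerivAt (fun z => hypF a (1 - z) / hypF a z)
      (-(sin (π * a) / π) / (z * (1 - z) * hypF a z ^ 2)) z := by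
  have hF := (hypF_pos ha hz).ne'
  refine ((hasDerivAt_hypF_one_sub ha hz).fun_div (hasDerivAt_hypF ha hz) hF).congr_deriv ?_
  rw [← hypWronskian_eq ha hz, hypWronskian]
  have := hz.1.ne'
  have := (sub_pos.2 hz.2).ne'
  field_simp
  ring

theorem hasDerivAt_one_sub_mul_hypF_mul_hypF (ha : a ∈ Ioo (0 : ℝ) 1) (hz : z ∈ Ioo (0 : ℝ) 1) :
    HasDerivAt (fun z => (1 - z) * hypF a z * hypF a (1 - z))
      ((sin (π * a) / π - hypF a z * hypE a (1 - z)) / z) z := by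
  refine ((((hasDerivAt_id' z).const_sub 1).fun_mul (hasDerivAt_hypF ha hz)).fun_mul
    (hasDerivAt_hypF_one_sub ha hz)).congr_deriv ?_
  rw [← hypWronskian_eq ha hz, hypWronskian, hypE]
  have := hz.1.ne'
  have := (sub_pos.2 hz.2).ne'
  field_simp
  ring

theorem muG_pos (ha : a ∈ Ioo (0 : ℝ) 1) (hr : r ∈ Ioo (0 : ℝ) 1) : 0 < muG a r := by
  have hz := sq_mem_Ioo hr
  rw [muG_eq_hypF a hz.2.le]
  have := sin_pi_mul_pos ha
  have := hypF_pos ha hz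
  have := hypF_pos ha (one_sub_mem_Ioo hz)
  positivity

theorem mA_pos (ha : a ∈ Ioo (0 : ℝ) 1) (hr : r ∈ Ioo (0 : ℝ) 1) : 0 < mA a r := by
  have hz := sq_mem_Ioo hr
  rw [mA_eq_hypF a hz.2.le]
  have := sin_pi_mul_pos ha
  have := hypF_pos ha hz
  have := hypF_pos ha (one_sub_mem_Ioo hz)
  have := sub_pos.2 hz.2
  positivity

theorem hasDerivAt_muG_exp_neg (ha : a ∈ Ioo (0 : ℝ) 1) (hx : 0 < x) :
    HasDerivAt (fun x => muG a (exp (-x))) (muG a (exp (-x)) / mA a (exp (-x))) x := by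
  have hz := exp_neg_sq_mem_Ioo hx
  have hcongr : (fun x => muG a (exp (-x))) =ᶠ[𝓝 x] fun x => π / (2 * sin (π * a)) *
      (hypF a (1 - exp (-x) ^ 2) / hypF a (exp (-x) ^ 2)) :=
    eventually_of_mem (Ioi_mem_nhds hx) fun y hy => muG_eq_hypF a (exp_neg_sq_mem_Ioo hy).2.le
  refine HasDerivAt.congr_of_eventuallyEq ?_ hcongr
  refine (((hasDerivAt_hypF_one_sub_div_hypF ha hz).comp x
    (hasDerivAt_exp_neg_sq x)).const_mul _).congr_deriv ?_
  rw [muG_eq_hypF a hz.2.le, mA_eq_hypF a hz.2.le]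
  have := (sin_pi_mul_pos ha).ne'
  have := (hypF_pos ha hz).ne'
  have := (hypF_pos ha (one_sub_mem_Ioo hz)).ne'
  have := (sub_pos.2 hz.2).ne'
  field_simp

/-- The derivative of `x ↦ mA a (exp (-x))`. -/
noncomputable def mASlope (a x : ℝ) : ℝ :=
  π / sin (π * a) * (hypF a (exp (-x) ^ 2) * hypE a (1 - exp (-x) ^ 2)) - 1

theorem hasDerivAt_mA_exp_neg (ha : a ∈ Ioo (0 : ℝ) 1) (hx : 0 < x) :
    HasDerivAt (fun x => mA a (exp (-x))) (mASlope a x) x := by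
  have hz := exp_neg_sq_mem_Ioo hx
  have hcongr : (fun x => mA a (exp (-x))) =ᶠ[𝓝 x] fun x => π / (2 * sin (π * a)) *
      ((1 - exp (-x) ^ 2) * hypF a (exp (-x) ^ 2) * hypF a (1 - exp (-x) ^ 2)) :=
    eventually_of_mem (Ioi_mem_nhds hx) fun y hy => mA_eq_hypF a (exp_neg_sq_mem_Ioo hy).2.le
  refine HasDerivAt.congr_of_eventuallyEq ?_ hcongr
  refine (((hasDerivAt_one_sub_mul_hypF_mul_hypF ha hz).comp x
    (hasDerivAt_exp_neg_sq x)).const_mul _).congr_deriv ?_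
  have := (sin_pi_mul_pos ha).ne'
  rw [mASlope]
  field_simp
  ring

theorem two_mul_sin_div_pi_le (ha : a ∈ Ioo (0 : ℝ) 1) (hz : z ∈ Ioo (0 : ℝ) 1) :
    2 * (sin (π * a) / π) ≤ hypF a z * hypE a (1 - z) := by
  have hF := hypF_pos ha hz
  have hflux : 2 * hypFlux a z ≤ z * hypF a z := by
    have hle := mul_le_mul_of_nonneg_right (mul_one_sub_le a) (mul_pos hz.1 hF).le
    linarith [hypFlux_le ha hz, mul_pos hz.1 hF]
  rw [← hypWronskian_eq ha hz, hypWronskian, hypE]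
  linarith [mul_le_mul_of_nonneg_right hflux (hypF_pos ha (one_sub_mem_Ioo hz)).le]

theorem one_le_mASlope (ha : a ∈ Ioo (0 : ℝ) 1) (hx : 0 < x) : 1 ≤ mASlope a x := by
  have hs := sin_pi_mul_pos ha
  have hle := mul_le_mul_of_nonneg_left (two_mul_sin_div_pi_le ha (exp_neg_sq_mem_Ioo hx))
    (div_pos pi_pos hs).le
  rw [mASlope, le_sub_iff_add_le]
  exact le_trans (by field_simp; norm_num) hle

theorem antitoneOn_mASlope (ha : a ∈ Ioo (0 : ℝ) 1) : AntitoneOn (mASlope a) (Ioi 0) :=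
  fun x hx y hy hxy => by
  have hzx := exp_neg_sq_mem_Ioo hx
  have hzy := exp_neg_sq_mem_Ioo hy
  have hz : exp (-y) ^ 2 ≤ exp (-x) ^ 2 := by gcongr
  have hF : hypF a (exp (-y) ^ 2) ≤ hypF a (exp (-x) ^ 2) :=
    monotoneOn_hypF ha (Ioo_subset_Ico_self hzy) (Ioo_subset_Ico_self hzx) hz
  have hE : hypE a (1 - exp (-y) ^ 2) ≤ hypE a (1 - exp (-x) ^ 2) :=
    antitoneOn_hypE ha (one_sub_mem_Ioo hzx) (one_sub_mem_Ioo hzy) (sub_le_sub_left hz 1)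
  have := (div_pos pi_pos (sin_pi_mul_pos ha)).le
  have := (hypF_pos ha hzx).le
  have := (hypE_pos ha (one_sub_mem_Ioo hzy)).le
  unfold mASlope
  gcongr

theorem tendsto_mA_exp_neg_zero (ha : a ∈ Ioo (0 : ℝ) 1) :
    Tendsto (fun x => mA a (exp (-x))) (𝓝[>] 0) (𝓝 0) := by
  have hlim := (((tendsto_one_sub_mul_hypF ha).mul ((tendsto_hypF_zero ha).comp
    tendsto_one_sub_nhdsLT_one)).comp tendsto_exp_neg_sq_nhdsGT_zero).const_mul
    (π / (2 * sin (π * a)))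
  rw [zero_mul, mul_zero] at hlim
  refine hlim.congr' (eventually_mem_nhdsWithin.mono fun x hx => ?_)
  exact (mA_eq_hypF a (exp_neg_sq_mem_Ioo hx).2.le).symm

theorem tendsto_muG_exp_neg_zero (ha : a ∈ Ioo (0 : ℝ) 1) :
    Tendsto (fun x => muG a (exp (-x))) (𝓝[>] 0) (𝓝 0) := by
  have hlim := ((((tendsto_hypF_zero ha).comp tendsto_one_sub_nhdsLT_one).div_atTop
    (tendsto_hypF_atTop ha)).comp tendsto_exp_neg_sq_nhdsGT_zero).const_mul
    (π / (2 * sin (π * a)))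
  rw [mul_zero] at hlim
  refine hlim.congr' (eventually_mem_nhdsWithin.mono fun x hx => ?_)
  exact (muG_eq_hypF a (exp_neg_sq_mem_Ioo hx).2.le).symm

theorem tendsto_muG_exp_neg_atTop (ha : a ∈ Ioo (0 : ℝ) 1) :
    Tendsto (fun x => muG a (exp (-x))) atTop atTop := by
  have hratio : Tendsto (fun z => hypF a (1 - z) / hypF a z) (𝓝[>] 0) atTop :=
    ((tendsto_hypF_atTop ha).comp tendsto_one_sub_nhdsGT_zero).atTop_mul_pos one_pos
      (by simpa using (tendsto_hypF_zero ha).inv₀ one_ne_zero)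
  refine ((hratio.comp tendsto_exp_neg_sq_atTop).const_mul_atTop
    (r := π / (2 * sin (π * a))) ?_).congr' ((eventually_gt_atTop 0).mono fun x hx => ?_)
  · have := sin_pi_mul_pos ha
    positivity
  · exact (muG_eq_hypF a (exp_neg_sq_mem_Ioo hx).2.le).symm

theorem surjOn_muG (ha : a ∈ Ioo (0 : ℝ) 1) : SurjOn (muG a) (Ioo 0 1) (Ioi 0) := fun w hw => by
  obtain ⟨x, hx, rfl⟩ := isPreconnected_Ioi.intermediate_value_Ioi
    (f := fun x => muG a (exp (-x))) (l₁ := 𝓝[>] 0) inf_le_right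
    (le_principal_iff.2 (Ioi_mem_atTop 0))
    (fun x hx => (hasDerivAt_muG_exp_neg ha hx).continuousAt.continuousWithinAt)
    (tendsto_muG_exp_neg_zero ha) (tendsto_muG_exp_neg_atTop ha) hw
  exact mem_image_of_mem _ (exp_neg_mem_Ioo hx)

theorem muG_abs (a r : ℝ) : muG a |r| = muG a r := by
  rw [muG, muG, Ka_eq_hypF a |r|, Ka_eq_hypF a r, sq_abs]

theorem abs_mem_Ioo_of_muG_ne_zero (ha : a ∈ Ioo (0 : ℝ) 1) (hr : muG a r ≠ 0) :
    |r| ∈ Ioo (0 : ℝ) 1 := by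
  refine ⟨abs_pos.2 fun hr₀ => hr ?_, lt_of_not_ge fun hr₁ => hr ?_⟩
  · rw [muG, hr₀, Ka_eq_hypF, hypF_eq_zero_of_one_le ha (by simp), mul_zero, zero_div, mul_zero]
  · rw [muG, Ka_eq_hypF a r, hypF_eq_zero_of_one_le ha ((one_le_sq_iff_one_le_abs r).2 hr₁),
      mul_zero, div_zero, mul_zero]

theorem muG_phiHP (ha : a ∈ Ioo (0 : ℝ) 1) (hK : 0 < K) (hr : r ∈ Ioo (0 : ℝ) 1) :
    muG a (phiHP a K r) = muG a r / K := by
  obtain ⟨q, -, hq⟩ := surjOn_muG ha (div_pos (muG_pos ha hr) hK)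
  exact Function.invFun_eq ⟨q, hq⟩

-- `muG a` is even, so `Function.invFun` may have chosen the negative preimage.
theorem abs_phiHP_mem_Ioo (ha : a ∈ Ioo (0 : ℝ) 1) (hK : 0 < K) (hr : r ∈ Ioo (0 : ℝ) 1) :
    |phiHP a K r| ∈ Ioo (0 : ℝ) 1 :=
  abs_mem_Ioo_of_muG_ne_zero ha <| by
    rw [muG_phiHP ha hK hr]
    exact (div_pos (muG_pos ha hr) hK).ne'

theorem antitoneOn_neg_log_abs_phiHP_add_div (ha : a ∈ Ioo (0 : ℝ) 1) (hK : 1 ≤ K) :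
    AntitoneOn (fun x => (-log |phiHP a K (exp (-x))| + (1 - 1 / K) * mA a (exp (-x))) / x)
      (Ioi 0) := by
  have hK₀ : 0 < K := one_pos.trans_le hK
  have hφ : ∀ x > 0, |phiHP a K (exp (-x))| ∈ Ioo (0 : ℝ) 1 := fun x hx =>
    abs_phiHP_mem_Ioo ha hK₀ (exp_neg_mem_Ioo hx)
  refine antitoneOn_div_of_comp_eq_const_mul (U := fun x => muG a (exp (-x))) (M' := mASlope a)
    (fun x hx => hasDerivAt_muG_exp_neg ha hx) (fun x hx => hasDerivAt_mA_exp_neg ha hx)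
    (fun x hx => muG_pos ha (exp_neg_mem_Ioo hx)) (fun x hx => mA_pos ha (exp_neg_mem_Ioo hx))
    (fun x hx => one_le_mASlope ha hx) (antitoneOn_mASlope ha) (tendsto_mA_exp_neg_zero ha)
    (one_div_pos.2 hK₀) ((div_le_one hK₀).2 hK)
    (fun x hx => neg_pos.2 (log_neg (hφ x hx).1 (hφ x hx).2)) fun x hx => ?_
  rw [neg_neg, exp_log (hφ x hx).1, muG_abs, muG_phiHP ha hK₀ (exp_neg_mem_Ioo hx),
    one_div_mul_eq_div]

end EllipticIntegrals

theorem classical_submultiplicative_general (a r t K : ℝ) (ha : a ∈ Ioo (0 : ℝ) 1)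
    (hr : r ∈ Ioo (0 : ℝ) 1) (ht : t ∈ Ioo (0 : ℝ) 1) (hK : 1 ≤ K) :
    phiHP a K r * phiHP a K t / phiHP a K (r * t) ≤
      exp ((1 - 1 / K) * (mA a r + mA a t - mA a (r * t))) := by
  have hrt : r * t ∈ Ioo (0 : ℝ) 1 :=
    ⟨mul_pos hr.1 ht.1, mul_lt_one_of_nonneg_of_lt_one_left hr.1.le hr.2 ht.2.le⟩
  have hφ : ∀ q ∈ Ioo (0 : ℝ) 1, 0 < |phiHP a K q| := fun q hq =>
    (abs_phiHP_mem_Ioo ha (one_pos.trans_le hK) hq).1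
  have hlog := map_add_le_of_antitoneOn_div (antitoneOn_neg_log_abs_phiHP_add_div ha hK)
    (neg_pos.2 (log_neg hr.1 hr.2)) (neg_pos.2 (log_neg ht.1 ht.2))
  rw [← neg_add, ← log_mul hr.1.ne' ht.1.ne', neg_neg, neg_neg, neg_neg, exp_log hrt.1,
    exp_log hr.1, exp_log ht.1] at hlog
  refine (le_abs_self _).trans ?_
  rw [abs_div, abs_mul, ← log_le_iff_le_exp (div_pos (mul_pos (hφ r hr) (hφ t ht)) (hφ _ hrt)),
    log_div (mul_pos (hφ r hr) (hφ t ht)).ne' (hφ _ hrt).ne',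
    log_mul (hφ r hr).ne' (hφ t ht).ne']
  linarith

theorem classical_submultiplicative (r t K : ℝ)
    (hr : r ∈ Set.Ioo (0:ℝ) 1) (ht : t ∈ Set.Ioo (0:ℝ) 1) (hK : 1 ≤ K) :
    phiHP (1/2) K r * phiHP (1/2) K t / phiHP (1/2) K (r * t) ≤
      Real.exp ((1 - 1/K) * (mA (1/2) r + mA (1/2) t - mA (1/2) (r * t))) :=
  classical_submultiplicative_general (1 / 2) r t K (by norm_num) hr ht hK
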